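/- The gap between the standard and positive semidefinite zero forcing numbers can be arbitrarily large: for every natural number C there exists a finite simple graph G such that Z(G) − Z_+(G) > C. -/

import Mathlib

open SimpleGraph

/-- The standard color change rule: a blue vertex `u ∈ S` with exactly one white
neighbor `v` can force `v` to become blue. -/
def StdStep {V : Type*} (G : SimpleGraph V) (S : Set V) (u v : V) : Prop :=
  u ∈ S ∧ v ∉ S ∧ G.Adj u v ∧ ∀ w : V, G.Adj u w → w ∉ S → w = v

/-- The positive semidefinite color change rule: a blue vertex `u ∈ S` can force a
white vertex `v` if `v` is the unique neighbor of `u` in the connected component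
containing `v` of the subgraph induced on the white vertices `Sᶜ`. -/
def PSDStep {V : Type*} (G : SimpleGraph V) (S : Set V) (u v : V) : Prop :=
  u ∈ S ∧ G.Adj u v ∧ ∃ hv : v ∈ (Sᶜ : Set V),
    ∀ w : V, ∀ hw : w ∈ (Sᶜ : Set V), G.Adj u w →
      (G.induce (Sᶜ : Set V)).Reachable ⟨v, hv⟩ ⟨w, hw⟩ → w = v

/-- `Derives step B S` means the blue set `S` is obtainable from the initial blue
set `B` by iterated application of the color change rule `step`. -/
inductive Derives {V : Type*} (step : Set V → V → V → Prop) : Set V → Set V → Prop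
  | refl (S : Set V) : Derives step S S
  | tail {S T : Set V} {u v : V} : Derives step S T → step T u v → Derives step S (insert v T)

/-- `B` is a standard zero forcing set of `G` if iterating the standard color
change rule from `B` colors all vertices blue. -/
def IsStdForcingSet {V : Type*} (G : SimpleGraph V) (B : Set V) : Prop :=
  Derives (StdStep G) B Set.univ

/-- `B` is a positive semidefinite zero forcing set of `G` if iterating the
positive semidefinite color change rule from `B` colors all vertices blue. -/
def IsPSDForcingSet {V : Type*} (G : SimpleGraph V) (B : Set V) : Prop :=
  Derives (PSDStep G) B Set.univ

/-- The standard zero forcing number `Z(G)`. -/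
noncomputable def Z {V : Type*} (G : SimpleGraph V) : ℕ :=
  sInf {n : ℕ | ∃ B : Set V, IsStdForcingSet G B ∧ B.ncard = n}

/-- The positive semidefinite zero forcing number `Z₊(G)`. -/
noncomputable def Zplus {V : Type*} (G : SimpleGraph V) : ℕ :=
  sInf {n : ℕ | ∃ B : Set V, IsPSDForcingSet G B ∧ B.ncard = n}

/-- A graph is claw-free if no induced subgraph is isomorphic to `K_{1,3}`. -/
def ClawFree {V : Type*} (G : SimpleGraph V) : Prop :=
  ¬ ∃ s : Set V, Nonempty (G.induce s ≃g completeBipartiteGraph (Fin 1) (Fin 3))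

/-- `S` is a minimum positive semidefinite zero forcing set of `G`. -/
def IsMinPSDForcingSet {V : Type*} (G : SimpleGraph V) (S : Set V) : Prop :=
  IsPSDForcingSet G S ∧ ∀ B : Set V, IsPSDForcingSet G B → S.ncard ≤ B.ncard

/-!
The star on `n` vertices has `Z₊ = 1` and `Z ≥ n - 2`. In an acyclic graph a blue vertex forces each
of its white neighbors under the positive semidefinite rule: a white path between two neighbors of
a blue vertex would close a cycle. So any single vertex of a finite tree forces all of it. Two
leaves of the star, on the other hand, form a fort, which the standard rule cannot enter from
outside, so a standard zero forcing set contains all leaves but at most one.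
-/

section StandardForcing

variable {V : Type*} {G : SimpleGraph V}

/-- Forts, the obstructions to standard zero forcing: a nonempty set `F` such that no vertex outside
`F` has exactly one neighbor in `F`. -/
def IsFort (G : SimpleGraph V) (F : Set V) : Prop :=
  F.Nonempty ∧ ∀ u ∉ F, ¬ ∃! v, v ∈ F ∧ G.Adj u v

theorem IsFort.disjoint_of_derives {F B S : Set V} (hF : IsFort G F) (hB : Disjoint F B)
    (h : Derives (StdStep G) B S) : Disjoint F S := by
  induction h with
  | refl => exact hB
  | @tail T u v _ hstep ih =>
    obtain ⟨huT, -, huv, hunique⟩ := hstep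
    refine Set.disjoint_insert_right.mpr ⟨fun hvF => ?_, ih⟩
    refine hF.2 u (ih.notMem_of_mem_right huT) ⟨v, ⟨hvF, huv⟩, ?_⟩
    exact fun w ⟨hwF, huw⟩ => hunique w huw (ih.notMem_of_mem_left hwF)

theorem IsStdForcingSet.not_disjoint_of_isFort {F B : Set V} (hB : IsStdForcingSet G B)
    (hF : IsFort G F) : ¬ Disjoint F B := fun hdisj =>
  hF.1.ne_empty (Set.disjoint_univ.mp (hF.disjoint_of_derives hdisj hB))

/-- Twin vertices: every third vertex is adjacent to both or to neither. The twins themselves may or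
may not be adjacent. -/
def AreTwins (G : SimpleGraph V) (a b : V) : Prop :=
  ∀ u, u ≠ a → u ≠ b → (G.Adj u a ↔ G.Adj u b)

theorem AreTwins.isFort {a b : V} (h : AreTwins G a b) (hab : a ≠ b) : IsFort G {a, b} := by
  refine ⟨Set.insert_nonempty a {b}, ?_⟩
  rintro u hu ⟨v, ⟨hv, huv⟩, hunique⟩
  have hiff : G.Adj u a ↔ G.Adj u b := h u (fun e => hu (.inl e)) (fun e => hu (.inr e))
  have hua : G.Adj u a := by
    rcases hv with rfl | rfl
    exacts [huv, hiff.mpr huv]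
  exact hab ((hunique a ⟨.inl rfl, hua⟩).trans (hunique b ⟨.inr rfl, hiff.mp hua⟩).symm)

theorem IsStdForcingSet.subsingleton_diff {B T : Set V} (hB : IsStdForcingSet G B)
    (hT : T.Pairwise (AreTwins G)) : (T \ B).Subsingleton := by
  rintro a ⟨haT, haB⟩ b ⟨hbT, hbB⟩
  by_contra hab
  refine hB.not_disjoint_of_isFort ((hT haT hbT hab).isFort hab) ?_
  exact Set.disjoint_insert_left.mpr ⟨haB, Set.disjoint_singleton_left.mpr hbB⟩

theorem exists_isStdForcingSet_ncard_eq_Z (G : SimpleGraph V) :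
    ∃ B : Set V, IsStdForcingSet G B ∧ B.ncard = Z G :=
  Nat.sInf_mem (s := {n | ∃ B : Set V, IsStdForcingSet G B ∧ B.ncard = n})
    ⟨_, Set.univ, .refl _, rfl⟩

theorem ncard_le_Z_add_one [Finite V] {T : Set V} (hT : T.Pairwise (AreTwins G)) :
    T.ncard ≤ Z G + 1 := by
  obtain ⟨B, hB, hcard⟩ := exists_isStdForcingSet_ncard_eq_Z G
  calc
    T.ncard ≤ (T \ B).ncard + B.ncard := Set.ncard_le_ncard_sdiff_add_ncard T B
    _ ≤ 1 + Z G :=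
      add_le_add (Set.ncard_le_one_iff_subsingleton.mpr (hB.subsingleton_diff hT)) hcard.le
    _ = Z G + 1 := add_comm _ _

end StandardForcing

section PositiveSemidefiniteForcing

variable {V : Type*} {G : SimpleGraph V}

theorem Derives.univ_of_forall_exists_step [Finite V] {step : Set V → V → V → Prop} {B : Set V}
    (h : ∀ S, B ⊆ S → S ≠ Set.univ → ∃ u, ∃ v ∉ S, step S u v) : Derives step B Set.univ := by
  suffices B ⊆ Set.univ ∧ Derives step B Set.univ from this.2
  refine Set.Finite.induction_to_univ (C := fun S => B ⊆ S ∧ Derives step B S) B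
    ⟨subset_rfl, .refl B⟩ ?_
  rintro S hS ⟨hBS, hder⟩
  obtain ⟨u, v, hv, hstep⟩ := h S hBS hS
  exact ⟨v, hv, hBS.trans (Set.subset_insert v S), hder.tail hstep⟩

theorem psdStep_of_isAcyclic (hG : G.IsAcyclic) {S : Set V} {u v : V} (hu : u ∈ S) (hv : v ∉ S)
    (huv : G.Adj u v) : PSDStep G S u v := by
  refine ⟨hu, huv, hv, fun w hw huw hvw => ?_⟩
  by_contra hne
  have hbridge : ¬ (G.deleteEdges {s(u, v)}).Reachable u v :=
    isAcyclic_iff_forall_adj_isBridge.mp hG huv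
  let whiteHom : G.induce Sᶜ →g G.deleteEdges {s(u, v)} :=
    { toFun := Subtype.val
      map_rel' := by
        rintro ⟨x, hx⟩ ⟨y, hy⟩ hxy
        refine deleteEdges_adj.mpr ⟨hxy, fun he => ?_⟩
        rcases Sym2.mem_iff.mp (he ▸ Sym2.mem_mk_left u v) with rfl | rfl
        exacts [hx hu, hy hu] }
  have hwv : (G.deleteEdges {s(u, v)}).Reachable w v := (hvw.map whiteHom).symm
  have huw' : (G.deleteEdges {s(u, v)}).Adj u w :=
    deleteEdges_adj.mpr ⟨huw, fun he => hne (Sym2.congr_right.mp he)⟩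
  exact hbridge (huw'.reachable.trans hwv)

theorem isPSDForcingSet_of_isTree [Finite V] (hG : G.IsTree) {B : Set V} (hB : B.Nonempty) :
    IsPSDForcingSet G B := by
  refine Derives.univ_of_forall_exists_step fun S hBS hS => ?_
  obtain ⟨b, hb⟩ := hB
  obtain ⟨x, hx⟩ := (Set.ne_univ_iff_exists_notMem S).mp hS
  obtain ⟨walk⟩ := hG.connected b x
  obtain ⟨d, -, hfst, hsnd⟩ := walk.exists_boundary_dart S (hBS hb) hx
  exact ⟨d.fst, d.snd, hsnd, psdStep_of_isAcyclic hG.isAcyclic hfst hsnd d.adj⟩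

theorem Zplus_le_one_of_isTree [Finite V] (hG : G.IsTree) : Zplus G ≤ 1 := by
  obtain ⟨r⟩ := hG.connected.nonempty
  exact Nat.sInf_le
    ⟨{r}, isPSDForcingSet_of_isTree hG (Set.singleton_nonempty r), Set.ncard_singleton r⟩

end PositiveSemidefiniteForcing

theorem pairwise_areTwins_starGraph {V : Type*} (r : V) :
    ({r}ᶜ : Set V).Pairwise (AreTwins (starGraph r)) := by
  intro a ha b hb _ u hua hub
  have har : a ≠ r := ha
  have hbr : b ≠ r := hb
  simp [starGraph_adj, hua, hub, har, hbr]

/-- The gap between the standard and positive semidefinite zero forcing numbers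
can be arbitrarily large. -/
theorem gap_arbitrarily_large :
    ∀ C : ℕ, ∃ (V : Type) (_ : Fintype V) (G : SimpleGraph V),
      Z G - Zplus G > C := by
  intro C
  let G : SimpleGraph (Fin (C + 4)) := starGraph 0
  refine ⟨Fin (C + 4), inferInstance, G, ?_⟩
  have hZplus : Zplus G ≤ 1 := Zplus_le_one_of_isTree (isTree_starGraph 0)
  have hleaves : ({0}ᶜ : Set (Fin (C + 4))).ncard = C + 3 :=
    Set.ncard_compl_of_ncard_eq_add {0} (by simp)
  have hZ : ({0}ᶜ : Set (Fin (C + 4))).ncard ≤ Z G + 1 :=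
    ncard_le_Z_add_one (pairwise_areTwins_starGraph 0)
  omega
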